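/- (Recursive formula for ∞-adic multiple zeta star values.) Let r ≥ 1 and m_1,…,m_r ∈ ℤ_{≥0}. Then in A: ζ_∞⋆(−m_1,…,−m_r) = Σ_{l=0}^{r} (−1)^l · ζ⋆_{<d}(−m_{l+1},…,−m_r) · [ Σ_{(a_1,…,a_l)} v^{a_1+⋯+a_l} · ζ_{<d}(−(m_1−a_1)) ⋯ ζ_{<d}(−(m_l−a_l)) · C(m_1,a_1) ⋯ C(m_l,a_l) · ζ_∞⋆(−a_1,…,−a_l) ], where the inner sum runs over all integer tuples (a_1,…,a_l) with 0 ≤ a_j < m_j and (q−1) | (m_j − a_j) for all 1 ≤ j ≤ l (an empty sum if some m_j = 0 for j ≤ l), and the l = 0 summand is ζ⋆_{<d}(−m_1,…,−m_r). -/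

import Mathlib

open Polynomial

/-- The power sum `S_i(-m)`: the sum of `n ^ m` over monic polynomials `n` of degree `i`. -/
noncomputable def powerSum (F : Type*) [Field F] [Fintype F] (i m : ℕ) : Polynomial F :=
  ∑ᶠ n ∈ {n : Polynomial F | n.Monic ∧ n.natDegree = i}, n ^ m

/-- The restricted power sum `S̃_i(-m)`: the sum of `n ^ m` over monic polynomials `n` of
degree `i` not divisible by `v`. -/
noncomputable def powerSumV (F : Type*) [Field F] [Fintype F] (v : Polynomial F) (i m : ℕ) :
    Polynomial F :=
  ∑ᶠ n ∈ {n : Polynomial F | n.Monic ∧ n.natDegree = i ∧ ¬ v ∣ n}, n ^ m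

/-- `ζ_∞(-m_1, …, -m_r)`, the ∞-adic multiple zeta value at nonpositive integers:
the sum over `i_1 > ⋯ > i_r ≥ 0` of `S_{i_1}(-m_1) ⋯ S_{i_r}(-m_r)`.
Only `m 0, …, m (r-1)` are used.  The depth-0 value is `1`. -/
noncomputable def zetaInf (F : Type*) [Field F] [Fintype F] (r : ℕ) (m : ℕ → ℕ) :
    Polynomial F :=
  ∑ᶠ i ∈ {i : Fin r → ℕ | StrictAnti i}, ∏ j : Fin r, powerSum F (i j) (m (j : ℕ))

/-- `ζ⋆_∞(-m_1, …, -m_r)`, the ∞-adic multiple zeta star value at nonpositive integers: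
the sum over `i_1 ≥ ⋯ ≥ i_r ≥ 0` of `S_{i_1}(-m_1) ⋯ S_{i_r}(-m_r)`. -/
noncomputable def zetaInfStar (F : Type*) [Field F] [Fintype F] (r : ℕ) (m : ℕ → ℕ) :
    Polynomial F :=
  ∑ᶠ i ∈ {i : Fin r → ℕ | Antitone i}, ∏ j : Fin r, powerSum F (i j) (m (j : ℕ))

/-- `ζ_v(-m_1, …, -m_r)`, the v-adic multiple zeta value at nonpositive integers. -/
noncomputable def zetaV (F : Type*) [Field F] [Fintype F] (v : Polynomial F) (r : ℕ)
    (m : ℕ → ℕ) : Polynomial F :=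
  ∑ᶠ i ∈ {i : Fin r → ℕ | StrictAnti i}, ∏ j : Fin r, powerSumV F v (i j) (m (j : ℕ))

/-- `ζ⋆_v(-m_1, …, -m_r)`, the v-adic multiple zeta star value at nonpositive integers. -/
noncomputable def zetaVStar (F : Type*) [Field F] [Fintype F] (v : Polynomial F) (r : ℕ)
    (m : ℕ → ℕ) : Polynomial F :=
  ∑ᶠ i ∈ {i : Fin r → ℕ | Antitone i}, ∏ j : Fin r, powerSumV F v (i j) (m (j : ℕ))

/-- `ζ_{<d}(-m_1, …, -m_r)`, the truncated multiple zeta value: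
the sum over `d > i_1 > ⋯ > i_r ≥ 0` of `S_{i_1}(-m_1) ⋯ S_{i_r}(-m_r)`. -/
noncomputable def zetaLt (F : Type*) [Field F] [Fintype F] (d r : ℕ) (m : ℕ → ℕ) :
    Polynomial F :=
  ∑ᶠ i ∈ {i : Fin r → ℕ | StrictAnti i ∧ ∀ j, i j < d},
    ∏ j : Fin r, powerSum F (i j) (m (j : ℕ))

/-- `ζ⋆_{<d}(-m_1, …, -m_r)`, the truncated multiple zeta star value. -/
noncomputable def zetaLtStar (F : Type*) [Field F] [Fintype F] (d r : ℕ) (m : ℕ → ℕ) :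
    Polynomial F :=
  ∑ᶠ i ∈ {i : Fin r → ℕ | Antitone i ∧ ∀ j, i j < d},
    ∏ j : Fin r, powerSum F (i j) (m (j : ℕ))

/-- `ζ_{<d}(-m)`, the depth-one truncated zeta value `Σ_{d > i ≥ 0} S_i(-m)`. -/
noncomputable def zetaLtOne (F : Type*) [Field F] [Fintype F] (d m : ℕ) : Polynomial F :=
  ∑ᶠ i ∈ {i : ℕ | i < d}, powerSum F i m

/-!
Cut each weakly decreasing chain `i_1 ≥ ⋯ ≥ i_r` at the threshold `d = deg v`: the entries below `d`
contribute `ζ⋆_{<d}(-m_{l+1}, …, -m_r)`, and the entries `d + k_1 ≥ ⋯ ≥ d + k_l` contribute a star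
sum of the shifted power sums `S_{d+k}(-m_j)`.  Euclidean division by `v` writes a monic polynomial
of degree `d + k` uniquely as `v b + c` with `b` monic of degree `k` and `deg c < d`.  In the
binomial expansion of `(v b + c) ^ m`, summing `c ^ (m - a)` over all `c` of degree less than `d`
leaves `-ζ_{<d}(-(m - a))` if `a < m` and `q - 1 ∣ m - a`, and `0` otherwise; so `S_{d+k}(-m)` is a
linear combination of the `S_k(-a)` with `a < m`, and the star sums expand multilinearly.
-/

section FiniteSums

variable {α β : Type*} {S : Set α} {T : Set β}

theorem finsum_mem_prod_mul {R : Type*} [NonUnitalNonAssocSemiring R] (hS : S.Finite)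
    (hT : T.Finite) (f : α → R) (g : β → R) :
    ∑ᶠ p ∈ S ×ˢ T, f p.1 * g p.2 = (∑ᶠ a ∈ S, f a) * ∑ᶠ b ∈ T, g b := by
  lift S to Finset α using hS
  lift T to Finset β using hT
  simp only [← Finset.coe_product, finsum_mem_coe_finset, Finset.sum_mul_sum, Finset.sum_product]

theorem finsum_mem_prod_add_pow {R : Type*} [CommSemiring R] (hS : S.Finite) (hT : T.Finite)
    (f : α → R) (g : β → R) (m : ℕ) :
    ∑ᶠ p ∈ S ×ˢ T, (f p.1 + g p.2) ^ m =
      ∑ a ∈ Finset.range (m + 1),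
        (∑ᶠ x ∈ S, f x ^ a) * (∑ᶠ y ∈ T, g y ^ (m - a)) * (m.choose a : R) := by
  simp_rw [← finsum_mem_prod_mul hS hT, finsum_mem_eq_finite_toFinset_sum _ (hS.prod hT), add_pow,
    Finset.sum_mul]
  exact Finset.sum_comm

theorem finsum_mem_zero_extended_eq_sum_piFinset {M : Type*} [AddCommMonoid M] (r : ℕ)
    (s : ℕ → Finset ℕ) (G : (Fin r → ℕ) → M) :
    ∑ᶠ a ∈ {a : ℕ → ℕ | (∀ j < r, a j ∈ s j) ∧ ∀ j, r ≤ j → a j = 0}, G (fun j => a j) =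
      ∑ b ∈ Fintype.piFinset fun j : Fin r => s j, G b := by
  rw [← finsum_mem_coe_finset]
  refine finsum_mem_eq_of_bijOn (fun a j => a j) ⟨?_, ?_, ?_⟩ fun _ _ => rfl
  · intro a ha
    simpa using fun j : Fin r => ha.1 j j.2
  · intro a ha b hb hab
    funext j
    rcases lt_or_ge j r with hj | hj
    · exact congrFun hab ⟨j, hj⟩
    · rw [ha.2 j hj, hb.2 j hj]
  · intro b hb
    have hb' : ∀ j : Fin r, b j ∈ s j := by simpa using hb
    refine ⟨fun j => if hj : j < r then b ⟨j, hj⟩ else 0, ⟨fun j hj => ?_, fun j hj => ?_⟩, ?_⟩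
    · simpa [hj] using hb' ⟨j, hj⟩
    · simp [hj.not_gt]
    · simp

end FiniteSums

section StarSum

theorem finite_antitone_lt (r n : ℕ) : {i : Fin r → ℕ | Antitone i ∧ ∀ j, i j < n}.Finite :=
  (Set.Finite.pi' fun _ : Fin r => Set.finite_lt_nat n).subset fun _ hi => hi.2

/-- The finite set of chains `n > i_1 ≥ ⋯ ≥ i_r ≥ 0`, each encoded as an antitone function on
`Fin r`. -/
noncomputable def antitoneChains (r n : ℕ) : Finset (Fin r → ℕ) :=
  (finite_antitone_lt r n).toFinset

theorem mem_antitoneChains {r n : ℕ} {i : Fin r → ℕ} :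
    i ∈ antitoneChains r n ↔ Antitone i ∧ ∀ j, i j < n := by
  simp [antitoneChains]

theorem cons_mem_antitoneChains {r n k : ℕ} {i : Fin r → ℕ} :
    (Fin.cons k i : Fin (r + 1) → ℕ) ∈ antitoneChains (r + 1) n ↔
      k < n ∧ i ∈ antitoneChains r (k + 1) := by
  simp only [mem_antitoneChains, Antitone, Fin.forall_fin_succ, Fin.cons_zero, Fin.cons_succ,
    Fin.succ_le_succ_iff, Nat.lt_succ_iff]
  constructor
  · rintro ⟨⟨⟨-, hk⟩, hi⟩, hn, -⟩
    exact ⟨hn, fun a b hab => (hi a).2 b hab, fun j => hk j (Fin.zero_le _)⟩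
  · rintro ⟨hn, hi, hk⟩
    refine ⟨⟨⟨fun _ => le_rfl, fun j _ => hk j⟩, fun a => ⟨fun h => ?_, fun b hab => hi hab⟩⟩, hn,
      fun j => (hk j).trans_lt hn⟩
    exact absurd h (Fin.succ_pos a).not_ge

theorem sum_antitoneChains_succ {M : Type*} [AddCommMonoid M] (r n : ℕ)
    (G : (Fin (r + 1) → ℕ) → M) :
    ∑ i ∈ antitoneChains (r + 1) n, G i =
      ∑ k ∈ Finset.range n, ∑ i ∈ antitoneChains r (k + 1), G (Fin.cons k i) := by
  rw [Finset.sum_sigma']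
  refine Finset.sum_bij' (fun i _ => ⟨i 0, Fin.tail i⟩) (fun p _ => Fin.cons p.1 p.2)
    (fun i hi => ?_) (fun p hp => ?_) (fun i _ => Fin.cons_self_tail i) (fun _ _ => rfl)
    (fun i _ => by rw [Fin.cons_self_tail])
  · rw [← Fin.cons_self_tail i] at hi
    simpa using cons_mem_antitoneChains.1 hi
  · exact cons_mem_antitoneChains.2 (by simpa using hp)

variable {R : Type*} [CommSemiring R]

/-- The truncated multiple star sum `Σ_{n > i_1 ≥ ⋯ ≥ i_r ≥ 0} f_1(i_1) ⋯ f_r(i_r)`, where `f_{j+1}`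
is encoded as `f j` and only `f 0, …, f (r - 1)` are used. -/
noncomputable def starSum (f : ℕ → ℕ → R) (r n : ℕ) : R :=
  ∑ i ∈ antitoneChains r n, ∏ j : Fin r, f j (i j)

theorem finsum_antitone_lt_eq_starSum (f : ℕ → ℕ → R) (r n : ℕ) :
    ∑ᶠ i ∈ {i : Fin r → ℕ | Antitone i ∧ ∀ j, i j < n}, ∏ j : Fin r, f j (i j) = starSum f r n :=
  finsum_mem_eq_finite_toFinset_sum _ (finite_antitone_lt r n)

theorem starSum_zero (f : ℕ → ℕ → R) (n : ℕ) : starSum f 0 n = 1 := by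
  have h : antitoneChains 0 n = {Fin.elim0} := by
    ext i
    simp [mem_antitoneChains, Subsingleton.elim i Fin.elim0, Subsingleton.antitone]
  simp [starSum, h]

theorem starSum_succ (f : ℕ → ℕ → R) (r n : ℕ) :
    starSum f (r + 1) n =
      ∑ k ∈ Finset.range n, f 0 k * starSum (fun j => f (j + 1)) r (k + 1) := by
  simp [starSum, sum_antitoneChains_succ, Fin.prod_univ_succ, Finset.mul_sum]

theorem starSum_add (f : ℕ → ℕ → R) (r d n : ℕ) :
    starSum f r (d + n) = ∑ p ∈ Finset.HasAntidiagonal.antidiagonal r,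
      starSum (fun j k => f j (d + k)) p.1 n * starSum (fun j => f (p.1 + j)) p.2 d := by
  induction r generalizing f n with
  | zero => simp [starSum_zero]
  | succ r ih =>
    have h_low : ∑ k ∈ Finset.range d, f 0 k * starSum (fun j => f (j + 1)) r (k + 1) =
        starSum f (r + 1) d := (starSum_succ f r d).symm
    have h_high : ∑ k ∈ Finset.range n, f 0 (d + k) * starSum (fun j => f (j + 1)) r (d + k + 1) =
        ∑ p ∈ Finset.HasAntidiagonal.antidiagonal r, starSum (fun j k => f j (d + k)) (p.1 + 1) n *
          starSum (fun j => f (p.1 + 1 + j)) p.2 d := by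
      simp_rw [add_assoc d, ih, Finset.mul_sum, starSum_succ _ _ n, Finset.sum_mul,
        add_right_comm _ 1, mul_assoc]
      exact Finset.sum_comm
    rw [starSum_succ, Finset.sum_range_add, h_low, h_high, Finset.Nat.sum_antidiagonal_succ]
    simp [starSum_zero]

theorem starSum_sum (r : ℕ) (s : ℕ → Finset ℕ) (c g : ℕ → ℕ → R) (n : ℕ) :
    starSum (fun j k => ∑ x ∈ s j, c j x * g x k) r n =
      ∑ᶠ a ∈ {a : ℕ → ℕ | (∀ j < r, a j ∈ s j) ∧ ∀ j, r ≤ j → a j = 0},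
        (∏ j ∈ Finset.range r, c j (a j)) * starSum (fun j => g (a j)) r n := by
  simp_rw [Finset.prod_range]
  refine Eq.trans ?_ (finsum_mem_zero_extended_eq_sum_piFinset r s fun b =>
    (∏ j : Fin r, c j (b j)) * ∑ i ∈ antitoneChains r n, ∏ j, g (b j) (i j)).symm
  simp_rw [starSum, Finset.prod_univ_sum, Finset.prod_mul_distrib, Finset.mul_sum]
  exact Finset.sum_comm

end StarSum

section PolynomialsOfBoundedDegree

theorem finite_degree_lt {R : Type*} [Semiring R] [Finite R] (n : ℕ) :
    {p : R[X] | p.degree < n}.Finite := by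
  have : Finite (degreeLT R n) := Finite.of_equiv _ (degreeLTEquiv R n).toEquiv.symm
  exact (Set.toFinite (degreeLT R n : Set R[X])).subset fun p hp => mem_degreeLT.2 hp

theorem finite_natDegree_lt {R : Type*} [Semiring R] [Finite R] (n : ℕ) :
    {p : R[X] | p.natDegree < n}.Finite :=
  (finite_degree_lt n).subset fun _ hp => degree_le_natDegree.trans_lt (Nat.cast_lt.2 hp)

theorem finite_monic_natDegree_eq {R : Type*} [Semiring R] [Finite R] (i : ℕ) :
    {p : R[X] | p.Monic ∧ p.natDegree = i}.Finite :=
  (finite_natDegree_lt (i + 1)).subset fun _ hp => Nat.lt_succ_of_le hp.2.le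

theorem finsum_degree_lt_one {R : Type*} [Ring R] [Finite R] {d : ℕ} (hd : 0 < d) :
    ∑ᶠ _c ∈ {c : R[X] | c.degree < d}, (1 : R[X]) = 0 := by
  have hcard : {c : R[X] | c.degree < d}.ncard = Nat.card R ^ d := by
    have h : {c : R[X] | c.degree < d} = (degreeLT R d : Set R[X]) := by
      ext c
      simp [mem_degreeLT]
    rw [h, ← Nat.card_coe_set_eq]
    simpa [Nat.card_fun] using Nat.card_congr (degreeLTEquiv R d).toEquiv
  have hcast : (Nat.card R : R) = 0 := by
    rw [← nsmul_one, card_nsmul_eq_zero']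
  rw [finsum_mem_eq_finite_toFinset_sum _ (finite_degree_lt d), Finset.sum_const, nsmul_one,
    ← Set.ncard_eq_toFinset_card _ (finite_degree_lt d), hcard, ← map_natCast (C : R →+* R[X]),
    Nat.cast_pow, hcast, zero_pow hd.ne', map_zero]

theorem bijOn_monic_mul_add {R : Type*} [Ring R] [Nontrivial R] {v : R[X]} (hv : v.Monic)
    (i : ℕ) :
    Set.BijOn (fun p : R[X] × R[X] => v * p.1 + p.2)
      ({b : R[X] | b.Monic ∧ b.natDegree = i} ×ˢ {c : R[X] | c.degree < v.natDegree})
      {n | n.Monic ∧ n.natDegree = v.natDegree + i} := by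
  have hdeg_v : v.degree = v.natDegree := degree_eq_natDegree hv.ne_zero
  refine ⟨?_, ?_, ?_⟩
  · rintro ⟨b, c⟩ ⟨⟨hb, rfl⟩, hc : c.degree < v.natDegree⟩
    have hlt : c.degree < (v * b).degree := by
      rw [degree_eq_natDegree (hv.mul hb).ne_zero, hv.natDegree_mul hb]
      exact hc.trans_le (Nat.cast_le.2 (Nat.le_add_right _ _))
    exact ⟨(hv.mul hb).add_of_left hlt, by
      rw [natDegree_add_eq_left_of_degree_lt hlt, hv.natDegree_mul hb]⟩
  · rintro ⟨b, c⟩ ⟨-, hc : c.degree < v.natDegree⟩ ⟨b', c'⟩ ⟨-, hc' : c'.degree < v.natDegree⟩ h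
    rw [← hdeg_v] at hc hc'
    have hbc := div_modByMonic_unique b c hv ⟨add_comm c (v * b), hc⟩
    have hbc' := div_modByMonic_unique b' c' hv ⟨(add_comm c' (v * b')).trans h.symm, hc'⟩
    exact Prod.ext (hbc.1.symm.trans hbc'.1) (hbc.2.symm.trans hbc'.2)
  · rintro n ⟨hn, hni⟩
    refine ⟨(n /ₘ v, n %ₘ v), ⟨⟨?_, ?_⟩, ?_⟩, (add_comm _ _).trans (modByMonic_add_div n v)⟩
    · have hle : v.degree ≤ n.degree := by
        rw [hdeg_v, degree_eq_natDegree hn.ne_zero, hni]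
        exact Nat.cast_le.2 (Nat.le_add_right _ _)
      refine hv.of_mul_monic_left ?_
      rw [← sub_eq_of_eq_add' (modByMonic_add_div n v).symm]
      exact hn.sub_of_left ((degree_modByMonic_lt n hv).trans_le hle)
    · rw [natDegree_divByMonic n hv, hni, Nat.add_sub_cancel_left]
    · exact (degree_modByMonic_lt n hv).trans_eq hdeg_v

theorem bijOn_units_mul_monic {K : Type*} [DivisionRing K] (d : ℕ) :
    Set.BijOn (fun p : Kˣ × K[X] => C (p.1 : K) * p.2)
      (Set.univ ×ˢ {n | n.Monic ∧ n.natDegree < d}) {c | c ≠ 0 ∧ c.natDegree < d} := by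
  refine ⟨?_, ?_, ?_⟩
  · rintro ⟨u, n⟩ ⟨-, hn, hnd⟩
    exact ⟨mul_ne_zero (C_ne_zero.2 u.ne_zero) hn.ne_zero, by
      rwa [natDegree_C_mul u.ne_zero]⟩
  · rintro ⟨u, n⟩ ⟨-, hn, -⟩ ⟨w, n'⟩ ⟨-, hn', -⟩ h
    obtain rfl : u = w := Units.ext <| by
      simpa [hn.leadingCoeff, hn'.leadingCoeff] using congrArg leadingCoeff h
    exact Prod.ext rfl (mul_left_cancel₀ (C_ne_zero.2 u.ne_zero) h)
  · rintro c ⟨hc, hcd⟩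
    have hl := leadingCoeff_ne_zero.2 hc
    refine ⟨(Units.mk0 _ hl, C c.leadingCoeff⁻¹ * c), ⟨trivial, ?_, ?_⟩, ?_⟩
    · simp [Monic, hl]
    · rwa [natDegree_C_mul (inv_ne_zero hl)]
    · change C c.leadingCoeff * (C c.leadingCoeff⁻¹ * c) = c
      rw [← mul_assoc, ← C_mul, mul_inv_cancel₀ hl, C_1, one_mul]

end PolynomialsOfBoundedDegree

section PowerSum

variable {F : Type*} [Field F] [Fintype F]

theorem zetaLtOne_eq_finsum_monic (d m : ℕ) :
    zetaLtOne F d m = ∑ᶠ n ∈ {n : F[X] | n.Monic ∧ n.natDegree < d}, n ^ m := by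
  have h : {n : F[X] | n.Monic ∧ n.natDegree < d} =
      ⋃ i ∈ {i : ℕ | i < d}, {n : F[X] | n.Monic ∧ n.natDegree = i} := by
    ext n
    simp
  rw [h, finsum_mem_biUnion _ (Set.finite_lt_nat d) fun i _ => finite_monic_natDegree_eq i]
  · rfl
  · rintro i - j - hij
    exact Set.disjoint_left.2 fun n hi hj => hij (hi.2.symm.trans hj.2)

theorem finsum_degree_lt_pow {m : ℕ} (hm : m ≠ 0) (d : ℕ) :
    ∑ᶠ c ∈ {c : F[X] | c.degree < d}, c ^ m =
      if Fintype.card F - 1 ∣ m then -zetaLtOne F d m else 0 := by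
  classical
  have hmonic : {n : F[X] | n.Monic ∧ n.natDegree < d}.Finite :=
    (finite_natDegree_lt d).subset fun _ hn => hn.2
  calc ∑ᶠ c ∈ {c : F[X] | c.degree < d}, c ^ m
      = ∑ᶠ c ∈ {c : F[X] | c ≠ 0 ∧ c.natDegree < d}, c ^ m := by
        refine finsum_mem_inter_support_eq _ _ _ (Set.ext fun c => ?_)
        by_cases hc : c = 0
        · simp [hc, hm]
        · simp [hc, degree_eq_natDegree hc]
    _ = ∑ᶠ p ∈ (Set.univ : Set Fˣ) ×ˢ {n : F[X] | n.Monic ∧ n.natDegree < d},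
          C ((p.1 : F) ^ m) * p.2 ^ m :=
        (finsum_mem_eq_of_bijOn _ (bijOn_units_mul_monic d) fun p _ => by
          rw [mul_pow, C_pow]).symm
    _ = C (∑ u : Fˣ, (u : F) ^ m) * zetaLtOne F d m := by
        rw [finsum_mem_prod_mul Set.finite_univ hmonic (fun u : Fˣ => C ((u : F) ^ m)) (· ^ m),
          finsum_mem_univ, finsum_eq_sum_of_fintype, ← map_sum, zetaLtOne_eq_finsum_monic]
    _ = if Fintype.card F - 1 ∣ m then -zetaLtOne F d m else 0 := by
        rw [FiniteField.sum_pow_units]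
        split_ifs <;> simp

theorem powerSum_natDegree_add_eq_sum_choose {v : F[X]} (hv : v.Monic) (i m : ℕ) :
    powerSum F (v.natDegree + i) m =
      ∑ a ∈ Finset.range (m + 1), v ^ a * powerSum F i a *
        (∑ᶠ c ∈ {c : F[X] | c.degree < v.natDegree}, c ^ (m - a)) * (m.choose a : F[X]) := by
  rw [powerSum, ← finsum_mem_eq_of_bijOn _ (bijOn_monic_mul_add hv i) fun _ _ => rfl,
    finsum_mem_prod_add_pow (finite_monic_natDegree_eq i) (finite_degree_lt v.natDegree)
      (v * ·) fun c => c]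
  simp_rw [mul_pow, ← mul_finsum_mem, powerSum]

theorem powerSum_natDegree_add {v : F[X]} (hv : v.Monic) (hd : 0 < v.natDegree) (i m : ℕ) :
    powerSum F (v.natDegree + i) m =
      ∑ a ∈ Finset.range m with Fintype.card F - 1 ∣ m - a,
        -(v ^ a * (zetaLtOne F v.natDegree (m - a) * (m.choose a : F[X]))) * powerSum F i a := by
  rw [powerSum_natDegree_add_eq_sum_choose hv, Finset.sum_range_succ, Nat.sub_self]
  simp_rw [pow_zero]
  rw [finsum_degree_lt_one hd, mul_zero, zero_mul, add_zero, Finset.sum_filter]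
  refine Finset.sum_congr rfl fun a ha => ?_
  rw [finsum_degree_lt_pow (Nat.sub_ne_zero_of_lt (Finset.mem_range.1 ha))]
  split_ifs <;> ring

theorem powerSum_eq_zero_of_lt {i m : ℕ} (h : m < i) : powerSum F i m = 0 := by
  induction m using Nat.strong_induction_on generalizing i with
  | _ m ih =>
    obtain ⟨i, rfl⟩ := Nat.exists_eq_add_of_lt h
    -- The shift formula for `v = X` lowers the degree by one and the exponent by at least one.
    rw [show m + i + 1 = (X : F[X]).natDegree + (m + i) by rw [natDegree_X, add_comm],
      powerSum_natDegree_add monic_X (by simp)]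
    refine Finset.sum_eq_zero fun a ha => ?_
    have ham : a < m := Finset.mem_range.1 (Finset.mem_filter.1 ha).1
    rw [ih a ham (by omega), mul_zero]

end PowerSum

section ZetaStar

variable {F : Type*} [Field F] [Fintype F]

theorem zetaLtStar_eq_starSum (d r : ℕ) (m : ℕ → ℕ) :
    zetaLtStar F d r m = starSum (fun j k => powerSum F k (m j)) r d :=
  finsum_antitone_lt_eq_starSum (fun j k => powerSum F k (m j)) r d

theorem zetaInfStar_eq_starSum {r n : ℕ} {m : ℕ → ℕ} (hn : ∀ j < r, m j < n) :
    zetaInfStar F r m = starSum (fun j k => powerSum F k (m j)) r n := by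
  rw [← finsum_antitone_lt_eq_starSum, zetaInfStar]
  refine finsum_mem_inter_support_eq _ _ _ (Set.ext fun i => ?_)
  simp only [Set.mem_inter_iff, Set.mem_ofPred_eq, Function.mem_support, and_congr_left_iff,
    iff_self_and]
  intro hprod _ j
  by_contra! hj
  exact hprod (Finset.prod_eq_zero (Finset.mem_univ j)
    (powerSum_eq_zero_of_lt ((hn j j.2).trans_le hj)))

theorem starSum_powerSum_natDegree_add {v : F[X]} (hv : v.Monic) (hd : 0 < v.natDegree)
    {l n : ℕ} {m : ℕ → ℕ} (hn : ∀ j < l, m j < n) :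
    starSum (fun j k => powerSum F (v.natDegree + k) (m j)) l n =
      (-1) ^ l * ∑ᶠ a ∈ {a : ℕ → ℕ |
          (∀ j < l, a j < m j ∧ (Fintype.card F - 1) ∣ (m j - a j)) ∧ ∀ j, l ≤ j → a j = 0},
        v ^ (∑ j ∈ Finset.range l, a j) *
          (∏ j ∈ Finset.range l,
            zetaLtOne F v.natDegree (m j - a j) * (Nat.choose (m j) (a j) : F[X])) *
          zetaInfStar F l a := by
  simp_rw [powerSum_natDegree_add hv hd]
  rw [starSum_sum l
    (fun j => (Finset.range (m j)).filter fun a => Fintype.card F - 1 ∣ m j - a)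
    (fun j a => -(v ^ a * (zetaLtOne F v.natDegree (m j - a) * ((m j).choose a : F[X]))))
    (fun a k => powerSum F k a), mul_finsum_mem]
  simp only [Finset.mem_filter, Finset.mem_range]
  refine finsum_mem_congr rfl fun a ha => ?_
  rw [zetaInfStar_eq_starSum fun j hj => (ha.1 j hj).1.trans (hn j hj), Finset.prod_neg,
    Finset.prod_mul_distrib, Finset.prod_pow_eq_pow_sum, Finset.card_range]
  ring

theorem zetaInfStar_recursive_general {v : F[X]} (hv : v.Monic) (hd : 0 < v.natDegree) (r : ℕ)
    (m : ℕ → ℕ) :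
    zetaInfStar F r m =
      ∑ l ∈ Finset.range (r + 1),
        (-1 : Polynomial F) ^ l * zetaLtStar F v.natDegree (r - l) (fun j => m (l + j)) *
          ∑ᶠ a ∈ {a : ℕ → ℕ |
              (∀ j < l, a j < m j ∧ (Fintype.card F - 1) ∣ (m j - a j)) ∧
                ∀ j, l ≤ j → a j = 0},
            v ^ (∑ j ∈ Finset.range l, a j) *
              (∏ j ∈ Finset.range l,
                zetaLtOne F v.natDegree (m j - a j) * (Nat.choose (m j) (a j) : Polynomial F)) *
              zetaInfStar F l a := by
  obtain ⟨n, hn⟩ : ∃ n, ∀ j < r, m j < n :=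
    ⟨(Finset.range r).sup m + 1, fun j hj =>
      Nat.lt_succ_of_le (Finset.le_sup (f := m) (Finset.mem_range.2 hj))⟩
  rw [zetaInfStar_eq_starSum (n := v.natDegree + n) fun j hj =>
      (hn j hj).trans_le (Nat.le_add_left _ _),
    starSum_add, Finset.Nat.sum_antidiagonal_eq_sum_range_succ_mk]
  refine Finset.sum_congr rfl fun l hl => ?_
  have hlr : l ≤ r := Nat.lt_succ_iff.1 (Finset.mem_range.1 hl)
  rw [starSum_powerSum_natDegree_add hv hd fun j hj => hn j (hj.trans_le hlr),
    zetaLtStar_eq_starSum]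
  exact mul_right_comm _ _ _

end ZetaStar

/-- Recursive formula for ∞-adic multiple zeta star values at negative integers.
The inner sum runs over tuples `(a_1, …, a_l)` (encoded as functions `a : ℕ → ℕ`
vanishing from index `l` on) with `0 ≤ a_j < m_j` and `(q-1) ∣ (m_j - a_j)`. -/
theorem zetaInfStar_recursive (F : Type*) [Field F] [Fintype F] (v : Polynomial F)
    (hv : v.Monic) (hvirr : Irreducible v) (hd : 0 < v.natDegree) (r : ℕ) (hr : 1 ≤ r)
    (m : ℕ → ℕ) :
    zetaInfStar F r m =
      ∑ l ∈ Finset.range (r + 1),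
        (-1 : Polynomial F) ^ l * zetaLtStar F v.natDegree (r - l) (fun j => m (l + j)) *
          ∑ᶠ a ∈ {a : ℕ → ℕ |
              (∀ j < l, a j < m j ∧ (Fintype.card F - 1) ∣ (m j - a j)) ∧
                ∀ j, l ≤ j → a j = 0},
            v ^ (∑ j ∈ Finset.range l, a j) *
              (∏ j ∈ Finset.range l,
                zetaLtOne F v.natDegree (m j - a j) * (Nat.choose (m j) (a j) : Polynomial F)) *
              zetaInfStar F l a :=
  zetaInfStar_recursive_general hv hd r m
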